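/- Main theorem (dimension d): let 𝒰 be an update family on ℤ^d that is not supercritical unrooted. Then there exists a constant κ > 0 such that for every n ∈ ℕ, every configuration η ∈ V(n, {−⌊κ n 2^n⌋,...,⌊κ n 2^n⌋}^d) satisfies η_0 = 1. That is, starting from all ones in the box of side 2⌊κ n 2^n⌋+1 and never using more than n zeroes simultaneously, the origin can never be set to zero. -/

import Mathlib

open Classical in
/-- A configuration on `Λ` extended by zeroes (`false`) outside `Λ`. -/
noncomputable def extCfg {d : ℕ} (Λ : Set (Fin d → ℤ)) (η : (Fin d → ℤ) → Bool) (s : Fin d → ℤ) : Bool :=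
  if s ∈ Λ then η s else false

/-- An update family: every rule is a finite nonempty subset of `ℤ^d \ {0}`. -/
def isUpdateFamily {d : ℕ} (U : Finset (Finset (Fin d → ℤ))) : Prop :=
  ∀ X ∈ U, X.Nonempty ∧ (0 : Fin d → ℤ) ∉ X

/-- A legal move: either nothing changes on `Λ`, or the state of one site `z ∈ Λ` is
flipped and some update rule translated at `z` is entirely at state `0`
(sites outside `Λ` counting as zeroes). -/
def legalMove {d : ℕ} (U : Finset (Finset (Fin d → ℤ))) (Λ : Set (Fin d → ℤ))
    (η η' : (Fin d → ℤ) → Bool) : Prop :=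
  (∀ s ∈ Λ, η' s = η s) ∨
  ∃ z ∈ Λ, η' z = !(η z) ∧ (∀ s ∈ Λ, s ≠ z → η' s = η s) ∧
    ∃ X ∈ U, ∀ x ∈ X, extCfg Λ η (z + x) = false

/-- An `n`-legal path from `η` to `η'`: a finite sequence of legal moves along which
every configuration has at most `n` zeroes in `Λ`. -/
def nLegalPath {d : ℕ} (U : Finset (Finset (Fin d → ℤ))) (Λ : Set (Fin d → ℤ)) (n : ℕ)
    (η η' : (Fin d → ℤ) → Bool) : Prop :=
  ∃ (m : ℕ) (p : ℕ → (Fin d → ℤ) → Bool),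
    (∀ s ∈ Λ, p 0 s = η s) ∧ (∀ s ∈ Λ, p m s = η' s) ∧
    (∀ j < m, legalMove U Λ (p j) (p (j + 1))) ∧
    (∀ j ≤ m, {s ∈ Λ | p j s = false}.encard ≤ (n : ℕ∞))

/-- `V n Λ`: the configurations reachable from all-ones by an `n`-legal path. -/
def V {d : ℕ} (U : Finset (Finset (Fin d → ℤ))) (n : ℕ) (Λ : Set (Fin d → ℤ)) :
    Set ((Fin d → ℤ) → Bool) :=
  {η | nLegalPath U Λ n (fun _ => true) η}

/-- Euclidean dot product on `ℝ^d`. -/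
def dotp {d : ℕ} (u v : Fin d → ℝ) : ℝ := ∑ i, u i * v i

/-- `u` is a stable direction for `U`: `u` is a unit vector and no update rule is
contained in the open half-space `{x : ⟨x,u⟩ < 0}`. -/
def stableDir {d : ℕ} (U : Finset (Finset (Fin d → ℤ))) (u : Fin d → ℝ) : Prop :=
  (∑ i, (u i) ^ 2 = 1) ∧ ∀ X ∈ U, ¬ ∀ x ∈ X, dotp (fun i => (x i : ℝ)) u < 0

/-- `U` is supercritical unrooted: some hyperplane of `ℝ^d` (through the origin)
contains all stable directions of `U`. -/
def supUnrooted {d : ℕ} (U : Finset (Finset (Fin d → ℤ))) : Prop :=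
  ∃ w : Fin d → ℝ, w ≠ 0 ∧ ∀ u : Fin d → ℝ, stableDir U u → dotp u w = 0


section helpers

/-- Coordinatewise closeness. -/
def nearC {ι : Type} (p q : ι → ℝ) (t : ℝ) : Prop := ∀ i, |p i - q i| ≤ t

theorem nearC.symm {ι : Type} {p q : ι → ℝ} {t : ℝ} (h : nearC p q t) : nearC q p t :=
  fun i => by rw [abs_sub_comm]; exact h i

theorem nearC.mono {ι : Type} {p q : ι → ℝ} {t s : ℝ} (h : nearC p q t) (hs : t ≤ s) :
    nearC p q s := fun i => (h i).trans hs

theorem nearC.tri {ι : Type} {p q w : ι → ℝ} {t s : ℝ} (h : nearC p q t) (h' : nearC q w s) :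
    nearC p w (t + s) := fun i => (abs_sub_le _ (q i) _).trans (add_le_add (h i) (h' i))

theorem nearC.sup {ι : Type} {p q w : ι → ℝ} {t : ℝ} (h : nearC p w t) (h' : nearC q w t) :
    nearC (p ⊔ q) w t := fun i => by
  rcases le_total (p i) (q i) with hh | hh
  · simpa [Pi.sup_apply, sup_of_le_right hh] using h' i
  · simpa [Pi.sup_apply, sup_of_le_left hh] using h i

/-- The reduction system: absorb a point near `B`, or merge two close points into their join,
at a scale depending on the number of points. -/
inductive RStep {ι : Type} (B : Set (ι → ℝ)) (r : ℕ → ℝ) :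
    Multiset (ι → ℝ) → Multiset (ι → ℝ) → Prop
  | absorb (p : ι → ℝ) (S : Multiset (ι → ℝ)) (b : ι → ℝ) (hb : b ∈ B)
      (h : nearC p b (r (Multiset.card S + 1))) : RStep B r (p ::ₘ S) S
  | merge (p q : ι → ℝ) (S : Multiset (ι → ℝ))
      (h : nearC p q (r (Multiset.card S + 2))) : RStep B r (p ::ₘ q ::ₘ S) ((p ⊔ q) ::ₘ S)

/-- Configurations reducing to the empty one. -/
inductive RGood {ι : Type} (B : Set (ι → ℝ)) (r : ℕ → ℝ) : Multiset (ι → ℝ) → Prop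
  | nil : RGood B r 0
  | step (P Q : Multiset (ι → ℝ)) (h : RStep B r P Q) (hQ : RGood B r Q) : RGood B r P

variable {ι : Type} {B : Set (ι → ℝ)} {r : ℕ → ℝ}

theorem RStep.card_eq {P Q : Multiset (ι → ℝ)} (h : RStep B r P Q) :
    Multiset.card P = Multiset.card Q + 1 := by
  cases h <;> simp

/-- Joinability of two configurations. -/
def RJoin (B : Set (ι → ℝ)) (r : ℕ → ℝ) (Q W : Multiset (ι → ℝ)) : Prop :=
  Q = W ∨ ∃ Z, RStep B r Q Z ∧ RStep B r W Z

theorem RJoin.symm {Q W : Multiset (ι → ℝ)} (h : RJoin B r Q W) : RJoin B r W Q := by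
  rcases h with h | ⟨Z, h1, h2⟩
  · exact Or.inl h.symm
  · exact Or.inr ⟨Z, h2, h1⟩

theorem absorb' {p : ι → ℝ} {S : Multiset (ι → ℝ)} {b : ι → ℝ} {t : ℝ} (hb : b ∈ B)
    (h : nearC p b t) (ht : t ≤ r (Multiset.card S + 1)) : RStep B r (p ::ₘ S) S :=
  RStep.absorb p S b hb (h.mono ht)

theorem merge' {p q : ι → ℝ} {S : Multiset (ι → ℝ)} {t : ℝ}
    (h : nearC p q t) (ht : t ≤ r (Multiset.card S + 2)) :
    RStep B r (p ::ₘ q ::ₘ S) ((p ⊔ q) ::ₘ S) :=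
  RStep.merge p q S (h.mono ht)

theorem join_am0 (r0 : ∀ k, 0 ≤ r k) (r2 : ∀ k, 2 * r (k + 1) ≤ r k)
    {a q b : ι → ℝ} {T : Multiset (ι → ℝ)} (hb : b ∈ B)
    (h : nearC a b (r (Multiset.card T + 2)))
    (h' : nearC a q (r (Multiset.card T + 2))) :
    RJoin B r (q ::ₘ T) ((a ⊔ q) ::ₘ T) := by
  have e := r2 (Multiset.card T + 1)
  have e0 := r0 (Multiset.card T + 2)
  have hq : nearC q b (r (Multiset.card T + 2) + r (Multiset.card T + 2)) := h'.symm.tri h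
  refine Or.inr ⟨T, absorb' hb hq ?_, absorb' hb ((h.mono ?_).sup hq) ?_⟩
  · linarith
  · linarith
  · linarith

theorem join_am (r0 : ∀ k, 0 ≤ r k) (r2 : ∀ k, 2 * r (k + 1) ≤ r k)
    {a b : ι → ℝ} {S W : Multiset (ι → ℝ)} (hb : b ∈ B)
    (h : nearC a b (r (Multiset.card S + 1))) {p q : ι → ℝ} {T : Multiset (ι → ℝ)}
    (hm : nearC p q (r (Multiset.card T + 2))) (he : a ::ₘ S = p ::ₘ q ::ₘ T)
    (hW : W = (p ⊔ q) ::ₘ T) : RJoin B r S W := by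
  subst hW
  rcases Multiset.cons_eq_cons.1 he with ⟨rfl, rfl⟩ | ⟨hne, cs, rfl, h2⟩
  · exact join_am0 r0 r2 hb (by simpa using h) hm
  · rcases Multiset.cons_eq_cons.1 h2 with ⟨rfl, rfl⟩ | ⟨hne', cs', rfl, rfl⟩
    · rw [sup_comm]
      exact join_am0 r0 r2 hb (by simpa using h) hm.symm
    · refine Or.inr ⟨(p ⊔ q) ::ₘ cs', ?_, ?_⟩
      · have e := r2 (Multiset.card cs' + 2)
        have e0 := r0 (Multiset.card cs' + 3)
        refine merge' hm ?_
        simp only [Multiset.card_cons]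
        linarith
      · rw [Multiset.cons_swap]
        have e := r2 (Multiset.card cs' + 2)
        have e0 := r0 (Multiset.card cs' + 3)
        refine absorb' hb h ?_
        simp only [Multiset.card_cons]
        linarith

/-- two merges sharing the point `a`. -/
theorem join_mm0 (r0 : ∀ k, 0 ≤ r k) (r2 : ∀ k, 2 * r (k + 1) ≤ r k)
    {a p q : ι → ℝ} {S T : Multiset (ι → ℝ)}
    (h : nearC a p (r (Multiset.card S + 2)))
    (h' : nearC a q (r (Multiset.card T + 2))) (he : p ::ₘ S = q ::ₘ T) :
    RJoin B r ((a ⊔ p) ::ₘ S) ((a ⊔ q) ::ₘ T) := by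
  rcases Multiset.cons_eq_cons.1 he with ⟨rfl, rfl⟩ | ⟨hne, cs, rfl, rfl⟩
  · exact Or.inl rfl
  · simp only [Multiset.card_cons] at h h'
    have e := r2 (Multiset.card cs + 2)
    have e0 := r0 (Multiset.card cs + 3)
    have h1 : nearC p q (r (Multiset.card cs + 3) + r (Multiset.card cs + 3)) := h.symm.tri h'
    refine Or.inr ⟨((a ⊔ p) ⊔ q) ::ₘ cs, merge' ((h'.mono ?_).sup h1) ?_, ?_⟩
    · have : r (Multiset.card cs + 1 + 2) = r (Multiset.card cs + 3) := rfl
      linarith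
    · linarith
    · rw [sup_right_comm]
      refine merge' ((h.mono ?_).sup h1.symm) ?_
      · have : r (Multiset.card cs + 1 + 2) = r (Multiset.card cs + 3) := rfl
        linarith
      · linarith

theorem join_mm (r0 : ∀ k, 0 ≤ r k) (r2 : ∀ k, 2 * r (k + 1) ≤ r k)
    {a b p q : ι → ℝ} {S T : Multiset (ι → ℝ)}
    (h : nearC a b (r (Multiset.card S + 2)))
    (h' : nearC p q (r (Multiset.card T + 2))) (he : a ::ₘ b ::ₘ S = p ::ₘ q ::ₘ T) :
    RJoin B r ((a ⊔ b) ::ₘ S) ((p ⊔ q) ::ₘ T) := by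
  rcases Multiset.cons_eq_cons.1 he with ⟨rfl, h1⟩ | ⟨hne, cs, h1, h2⟩
  · exact join_mm0 r0 r2 h h' h1
  · rcases Multiset.cons_eq_cons.1 h2 with ⟨rfl, rfl⟩ | ⟨hne', cs', rfl, rfl⟩
    · rw [sup_comm p q]
      refine join_mm0 r0 r2 h h'.symm ?_
      rw [h1]
    · rcases Multiset.cons_eq_cons.1 h1 with ⟨rfl, rfl⟩ | ⟨hne'', cs'', rfl, h3⟩
      · rw [sup_comm a b]
        refine join_mm0 r0 r2 h.symm h' (Multiset.cons_swap _ _ _)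
      · rcases Multiset.cons_eq_cons.1 h3 with ⟨rfl, rfl⟩ | ⟨hne3, ds, rfl, rfl⟩
        · rw [sup_comm a q, sup_comm p q]
          refine join_mm0 r0 r2 h.symm h'.symm (Multiset.cons_swap _ _ _)
        · simp only [Multiset.card_cons] at h h'
          have e := r2 (Multiset.card ds + 3)
          have e0 := r0 (Multiset.card ds + 4)
          refine Or.inr ⟨(p ⊔ q) ::ₘ (a ⊔ b) ::ₘ ds, ?_, ?_⟩
          · have : (a ⊔ b) ::ₘ p ::ₘ q ::ₘ ds = p ::ₘ q ::ₘ (a ⊔ b) ::ₘ ds := by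
              rw [Multiset.cons_swap, Multiset.cons_swap (a ⊔ b) q]
            rw [this]
            refine merge' h' ?_
            simp only [Multiset.card_cons]
            have : r (Multiset.card ds + 1 + 1 + 2) = r (Multiset.card ds + 4) := rfl
            have : r (Multiset.card ds + 1 + 2) = r (Multiset.card ds + 3) := rfl
            linarith
          · have : (p ⊔ q) ::ₘ a ::ₘ b ::ₘ ds = a ::ₘ b ::ₘ (p ⊔ q) ::ₘ ds := by
              rw [Multiset.cons_swap, Multiset.cons_swap (p ⊔ q) b]
            rw [this, Multiset.cons_swap (p ⊔ q) (a ⊔ b)]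
            refine merge' h ?_
            simp only [Multiset.card_cons]
            have : r (Multiset.card ds + 1 + 1 + 2) = r (Multiset.card ds + 4) := rfl
            have : r (Multiset.card ds + 1 + 2) = r (Multiset.card ds + 3) := rfl
            linarith

theorem RStep.diamond (r0 : ∀ k, 0 ≤ r k) (r2 : ∀ k, 2 * r (k + 1) ≤ r k)
    {P P' Q W : Multiset (ι → ℝ)} (h1 : RStep B r P Q) (h2 : RStep B r P' W) (he : P = P') :
    RJoin B r Q W := by
  cases h1 with
  | absorb a S b hb h =>
    cases h2 with
    | absorb a' S' b' hb' h' =>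
      rcases Multiset.cons_eq_cons.1 he with ⟨rfl, rfl⟩ | ⟨hne, cs, rfl, rfl⟩
      · exact Or.inl rfl
      · have e := r2 (Multiset.card cs + 1)
        have e0 := r0 (Multiset.card cs + 2)
        simp only [Multiset.card_cons] at h h'
        have e1 : r (Multiset.card cs + 1 + 1) = r (Multiset.card cs + 2) := rfl
        exact Or.inr ⟨cs, absorb' hb' h' (by linarith), absorb' hb h (by linarith)⟩
    | merge p q T h' => exact join_am r0 r2 hb h h' he rfl
  | merge p q T h =>
    cases h2 with
    | absorb a' S' b' hb' h' => exact (join_am r0 r2 hb' h' h he.symm rfl).symm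
    | merge p' q' T' h' => exact join_mm r0 r2 h h' he

theorem RGood.of_step (r0 : ∀ k, 0 ≤ r k) (r2 : ∀ k, 2 * r (k + 1) ≤ r k)
    {P : Multiset (ι → ℝ)} (hP : RGood B r P) : ∀ Q, RStep B r P Q → RGood B r Q := by
  induction hP with
  | nil => intro Q h; have := h.card_eq; simp at this
  | step P W hW hg ih =>
    intro Q h
    rcases RStep.diamond r0 r2 h hW rfl with rfl | ⟨Z, hQZ, hWZ⟩
    · exact hg
    · exact RGood.step _ _ hQZ (ih Z hWZ)

theorem RStep.good_iff (r0 : ∀ k, 0 ≤ r k) (r2 : ∀ k, 2 * r (k + 1) ≤ r k)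
    {P Q : Multiset (ι → ℝ)} (h : RStep B r P Q) : RGood B r P ↔ RGood B r Q :=
  ⟨fun hP => hP.of_step r0 r2 Q h, fun hQ => RGood.step _ _ h hQ⟩

/-- Merging a whole tight group. -/
theorem good_fold (r0 : ∀ k, 0 ≤ r k) (r2 : ∀ k, 2 * r (k + 1) ≤ r k) {n : ℕ} {R : ℝ}
    (rn : ∀ k ≤ n, R + R ≤ r k) (z : ι → ℝ) (S W : Multiset (ι → ℝ)) :
    ∀ v : ι → ℝ, nearC v z R → (∀ w ∈ W, nearC w z R) →
      Multiset.card W + Multiset.card S + 1 ≤ n →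
      (RGood B r (v ::ₘ (W + S)) ↔ RGood B r (Multiset.fold (α := ι → ℝ) (· ⊔ ·) v W ::ₘ S)) := by
  induction W using Multiset.induction with
  | empty => intro v _ _ _; simp
  | cons w W ih =>
    intro v hv hW hc
    simp only [Multiset.card_cons] at hc
    have hw := hW w (Multiset.mem_cons_self _ _)
    rw [Multiset.fold_cons'_right, ← ih (v ⊔ w) (hv.sup hw)
      (fun x hx => hW x (Multiset.mem_cons_of_mem hx)) (by omega), Multiset.cons_add]
    apply RStep.good_iff r0 r2
    refine merge' (hv.tri hw.symm) (rn _ ?_)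
    simp only [Multiset.card_add]
    omega

theorem le_fold_sup (W : Multiset (ι → ℝ)) (v : ι → ℝ) :
    v ≤ Multiset.fold (α := ι → ℝ) (· ⊔ ·) v W ∧ ∀ w ∈ W, w ≤ Multiset.fold (α := ι → ℝ) (· ⊔ ·) v W := by
  induction W using Multiset.induction with
  | empty => simp
  | cons w W ih =>
    rw [Multiset.fold_cons_left]
    refine ⟨ih.1.trans le_sup_right, fun x hx => ?_⟩
    rcases Multiset.mem_cons.1 hx with rfl | hx
    · exact le_sup_left
    · exact (ih.2 x hx).trans le_sup_right

/-- Adding a point dominated by a tight group does not change goodness. -/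
theorem good_add (r0 : ∀ k, 0 ≤ r k) (r2 : ∀ k, 2 * r (k + 1) ≤ r k) {n : ℕ} {R : ℝ}
    (hR : 0 ≤ R) (rn : ∀ k ≤ n, R + R ≤ r k) (z : ι → ℝ) (S W : Multiset (ι → ℝ)) (hW0 : W ≠ 0)
    (hW : ∀ w ∈ W, nearC w z R) (hz : ∀ i, ∃ w ∈ W, z i ≤ w i)
    (hc : Multiset.card W + Multiset.card S + 1 ≤ n) :
    RGood B r (z ::ₘ (W + S)) ↔ RGood B r (W + S) := by
  obtain ⟨v, hv⟩ := Multiset.exists_mem_of_ne_zero hW0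
  obtain ⟨W, rfl⟩ := Multiset.exists_cons_of_mem hv
  have hzz : nearC z z R := fun i => by simpa using hR
  have h1 := good_fold (B := B) r0 r2 rn z S (z ::ₘ W) v (hW v hv)
    (by
      intro w hw
      rcases Multiset.mem_cons.1 hw with rfl | hw
      · exact hzz
      · exact hW w (Multiset.mem_cons_of_mem hw)) (by simpa using hc)
  have h2 := good_fold (B := B) r0 r2 rn z S W v (hW v hv)
    (fun w hw => hW w (Multiset.mem_cons_of_mem hw))
    (by simp only [Multiset.card_cons] at hc; omega)
  have h3 : Multiset.fold (α := ι → ℝ) (· ⊔ ·) v (z ::ₘ W) = Multiset.fold (α := ι → ℝ) (· ⊔ ·) v W := by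
    rw [Multiset.fold_cons_left]
    apply sup_of_le_right
    intro i
    obtain ⟨w, hw, hwi⟩ := hz i
    refine hwi.trans ?_
    rcases Multiset.mem_cons.1 hw with rfl | hw
    · exact (le_fold_sup W w).1 i
    · exact (le_fold_sup W v).2 w hw i
  rw [h3] at h1
  rw [Multiset.cons_add, h2, ← h1, Multiset.cons_add, Multiset.cons_swap]

/-- Distance bound for good configurations. -/
theorem RGood.dist (r0 : ∀ k, 0 ≤ r k) (r2 : ∀ k, 2 * r (k + 1) ≤ r k)
    {P : Multiset (ι → ℝ)} (hP : RGood B r P) :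
    ∀ p ∈ P, ∃ b ∈ B, nearC p b (r 0 - r (Multiset.card P)) := by
  induction hP with
  | nil => intro p hp; simp at hp
  | step P Q h hg ih =>
    intro p hp
    cases h with
    | absorb a S b hb h =>
      have e := r2 (Multiset.card Q)
      have e1 := r0 (Multiset.card Q + 1)
      have e2 : r (Multiset.card Q) ≤ r 0 := by
        generalize Multiset.card Q = k
        induction k with
        | zero => exact le_rfl
        | succ k ih => have := r2 k; have := r0 (k + 1); linarith
      rw [Multiset.card_cons]
      rcases Multiset.mem_cons.1 hp with rfl | hp
      · exact ⟨b, hb, h.mono (by linarith)⟩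
      · obtain ⟨b', hb', h'⟩ := ih p hp
        exact ⟨b', hb', h'.mono (by linarith)⟩
    | merge a c S h =>
      have e := r2 (Multiset.card S + 1)
      have e1 := r0 (Multiset.card S + 2)
      have e3 : r (Multiset.card S + 1 + 1) = r (Multiset.card S + 2) := rfl
      simp only [Multiset.card_cons] at ih ⊢
      have haa : ∀ x : ι → ℝ, nearC x x (r (Multiset.card S + 2)) := fun x i => by simpa using e1
      have key : ∀ x, nearC (a ⊔ c) x (r (Multiset.card S + 2)) →
          ∃ b ∈ B, nearC x b (r 0 - r (Multiset.card S + 1 + 1)) := by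
        intro x hx
        obtain ⟨b', hb', h'⟩ := ih (a ⊔ c) (Multiset.mem_cons_self _ _)
        exact ⟨b', hb', (hx.symm.tri h').mono (by linarith)⟩
      rcases Multiset.mem_cons.1 hp with rfl | hp
      · exact key _ ((haa p).sup h.symm)
      · rcases Multiset.mem_cons.1 hp with rfl | hp
        · exact key _ (h.sup (haa p))
        · obtain ⟨b', hb', h'⟩ := ih p (Multiset.mem_cons_of_mem hp)
          exact ⟨b', hb', h'.mono (by linarith)⟩

end helpers

/-- Coordinates along stable directions. -/
def stabCoord {d : ℕ} (U : Finset (Finset (Fin d → ℤ))) (s : Fin d → ℤ) :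
    {u : Fin d → ℝ // stableDir U u} → ℝ := fun u => dotp (fun i => (s i : ℝ)) u.1

theorem stabCoord_add {d : ℕ} (U : Finset (Finset (Fin d → ℤ))) (s t : Fin d → ℤ) :
    stabCoord U (s + t) = stabCoord U s + stabCoord U t := by
  funext u
  simp [stabCoord, dotp, add_mul, Finset.sum_add_distrib]

theorem coercive {d : ℕ} (U : Finset (Finset (Fin d → ℤ))) (h : ¬ supUnrooted U) :
    ∃ C : ℝ, 0 < C ∧ ∀ (s : Fin d → ℤ) (M : ℝ), 0 ≤ M → (∀ u, |stabCoord U s u| ≤ M) →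
      ∀ i, |(s i : ℝ)| ≤ C * M := by
  have hspan : Submodule.span ℝ {u : Fin d → ℝ | stableDir U u} = ⊤ := by
    by_contra hne
    obtain ⟨f, hf0, hf⟩ := Submodule.exists_le_ker_of_lt_top _ (lt_top_iff_ne_top.2 hne)
    apply h
    have hfe : ∀ u : Fin d → ℝ, f u = dotp u (fun i => f (Pi.single i 1)) := by
      intro u
      conv_lhs => rw [← LinearMap.sum_single_apply (φ := fun _ => ℝ) u]
      rw [map_sum]
      unfold dotp
      refine Finset.sum_congr rfl fun i _ => ?_
      have : (Pi.single i (u i) : Fin d → ℝ) = u i • Pi.single i 1 := by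
        rw [← Pi.single_smul]; simp
      first
        | rw [this, map_smul, smul_eq_mul]
        | (rw [LinearMap.single_apply, this, map_smul, smul_eq_mul])
    refine ⟨fun i => f (Pi.single i 1), ?_, ?_⟩
    · intro h0
      apply hf0
      ext1
      ext
      simpa using congrFun h0 _
    · intro u hu
      rw [← hfe]
      exact hf (Submodule.subset_span hu)
  have hv : ∀ v ∈ Submodule.span ℝ {u : Fin d → ℝ | stableDir U u},
      ∃ C : ℝ, 0 ≤ C ∧ ∀ (s : Fin d → ℤ) (M : ℝ), 0 ≤ M → (∀ u, |stabCoord U s u| ≤ M) →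
        |dotp (fun i => (s i : ℝ)) v| ≤ C * M := by
    intro v hv
    induction hv using Submodule.span_induction with
    | mem x hx => exact ⟨1, zero_le_one, fun s M _ hs => by rw [one_mul]; exact hs ⟨x, hx⟩⟩
    | zero => exact ⟨0, le_rfl, fun s M _ _ => by simp [dotp]⟩
    | add x y _ _ hx hy =>
      obtain ⟨C, hC, hx⟩ := hx
      obtain ⟨C', hC', hy⟩ := hy
      refine ⟨C + C', by positivity, fun s M hM hs => ?_⟩
      have : dotp (fun i => (s i : ℝ)) (x + y) =
          dotp (fun i => (s i : ℝ)) x + dotp (fun i => (s i : ℝ)) y := by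
        simp [dotp, mul_add, Finset.sum_add_distrib]
      rw [this, add_mul]
      exact (abs_add_le _ _).trans (add_le_add (hx s M hM hs) (hy s M hM hs))
    | smul a x _ hx =>
      obtain ⟨C, hC, hx⟩ := hx
      refine ⟨|a| * C, by positivity, fun s M hM hs => ?_⟩
      have : dotp (fun i => (s i : ℝ)) (a • x) = a * dotp (fun i => (s i : ℝ)) x := by
        simp only [dotp, Pi.smul_apply, smul_eq_mul, Finset.mul_sum]
        exact Finset.sum_congr rfl fun i _ => by ring
      rw [this, abs_mul, mul_assoc]
      exact mul_le_mul_of_nonneg_left (hx s M hM hs) (abs_nonneg a)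
  choose C hC hCs using fun j : Fin d => hv (Pi.single j 1) (by rw [hspan]; trivial)
  refine ⟨1 + ∑ j, C j, ?_, ?_⟩
  · have : 0 ≤ ∑ j, C j := Finset.sum_nonneg fun j _ => hC j
    linarith
  · intro s M hM hs i
    have h1 := hCs i s M hM hs
    have h2 : dotp (fun i => (s i : ℝ)) (Pi.single i 1) = (s i : ℝ) := by
      simp [dotp, Pi.single_apply]
    rw [h2] at h1
    refine h1.trans (mul_le_mul_of_nonneg_right ?_ hM)
    have := Finset.single_le_sum (fun j _ => hC j) (Finset.mem_univ i)
    linarith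

theorem range_bound {d : ℕ} (U : Finset (Finset (Fin d → ℤ))) :
    ∃ R : ℝ, 0 < R ∧ ∀ X ∈ U, ∀ x ∈ X, ∀ u, |stabCoord U x u| ≤ R := by
  refine ⟨1 + ∑ X ∈ U, ∑ x ∈ X, ∑ i, |(x i : ℝ)|, by positivity, ?_⟩
  intro X hX x hx u
  have h1 : |stabCoord U x u| ≤ ∑ i, |(x i : ℝ)| := by
    refine (Finset.abs_sum_le_sum_abs (fun i => (x i : ℝ) * u.1 i) Finset.univ).trans (Finset.sum_le_sum fun i _ => ?_)
    rw [abs_mul]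
    have h2 : (u.1 i) ^ 2 ≤ 1 := by
      rw [← u.2.1]
      exact Finset.single_le_sum (f := fun i => (u.1 i) ^ 2) (fun j _ => sq_nonneg _)
        (Finset.mem_univ i)
    have h3 : |u.1 i| ≤ 1 := (sq_le_one_iff_abs_le_one _).1 h2
    exact mul_le_of_le_one_right (abs_nonneg _) h3
  have h2 : ∑ i, |(x i : ℝ)| ≤ ∑ x ∈ X, ∑ i, |(x i : ℝ)| :=
    Finset.single_le_sum (f := fun x : Fin d → ℤ => ∑ i, |(x i : ℝ)|)
      (fun _ _ => by positivity) hx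
  have h3 : ∑ x ∈ X, ∑ i, |(x i : ℝ)| ≤ ∑ X ∈ U, ∑ x ∈ X, ∑ i, |(x i : ℝ)| :=
    Finset.single_le_sum (f := fun X : Finset (Fin d → ℤ) => ∑ x ∈ X, ∑ i, |(x i : ℝ)|)
      (fun _ _ => by positivity) hX
  linarith

/-- One legal move preserves goodness. -/
theorem good_move {d : ℕ} {U : Finset (Finset (Fin d → ℤ))} (hU : isUpdateFamily U)
    {Λ : Set (Fin d → ℤ)} {r : ℕ → ℝ} {n : ℕ} {R : ℝ} (hR : 0 ≤ R)
    (hRU : ∀ X ∈ U, ∀ x ∈ X, ∀ u, |stabCoord U x u| ≤ R)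
    (r0 : ∀ k, 0 ≤ r k) (r2 : ∀ k, 2 * r (k + 1) ≤ r k) (rn : ∀ k ≤ n, R + R ≤ r k)
    (F : Finset (Fin d → ℤ)) (z : Fin d → ℤ) (hc : F.card + 1 ≤ n)
    (X : Finset (Fin d → ℤ)) (hX : X ∈ U) (hx : ∀ x ∈ X, z + x ∉ Λ ∨ z + x ∈ F) :
    RGood (stabCoord U '' Λᶜ) r (stabCoord U z ::ₘ F.val.map (stabCoord U)) ↔
      RGood (stabCoord U '' Λᶜ) r (F.val.map (stabCoord U)) := by
  have hnear : ∀ x ∈ X, nearC (stabCoord U (z + x)) (stabCoord U z) R := by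
    intro x hxX u
    rw [stabCoord_add]
    simpa using hRU X hX x hxX u
  by_cases hB : ∃ x ∈ X, z + x ∉ Λ
  · obtain ⟨x, hxX, hxL⟩ := hB
    apply RStep.good_iff r0 r2
    refine absorb' (b := stabCoord U (z + x)) ⟨z + x, hxL, rfl⟩ (hnear x hxX).symm ?_
    have := rn (Multiset.card (F.val.map (stabCoord U)) + 1) (by simpa using hc)
    linarith
  · push Not at hB
    classical
    have hsub : X.image (fun x => z + x) ⊆ F := by
      intro y hy
      obtain ⟨x, hxX, rfl⟩ := Finset.mem_image.1 hy
      exact (hx x hxX).resolve_left (fun hh => hh (hB x hxX))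
    obtain ⟨T, hT⟩ := Multiset.le_iff_exists_add.1 (Finset.val_le_iff.2 hsub)
    have hF : F.val.map (stabCoord U) =
        (X.image (fun x => z + x)).val.map (stabCoord U) + T.map (stabCoord U) := by
      rw [hT, Multiset.map_add]
    have hcard : Multiset.card (F.val.map (stabCoord U)) + 1 ≤ n := by simpa using hc
    rw [hF] at hcard ⊢
    refine good_add r0 r2 hR rn _ _ _ ?_ ?_ ?_ (by simpa using hcard)
    · obtain ⟨x, hxX⟩ := (hU X hX).1
      intro h0
      have hm : stabCoord U (z + x) ∈ (X.image (fun x => z + x)).val.map (stabCoord U) :=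
        Multiset.mem_map_of_mem _ (Finset.mem_image_of_mem _ hxX)
      rw [h0] at hm
      simp at hm
    · intro w hw
      obtain ⟨y, hy, rfl⟩ := Multiset.mem_map.1 hw
      obtain ⟨x, hxX, rfl⟩ := Finset.mem_image.1 hy
      exact hnear x hxX
    · intro u
      have := u.2.2 X hX
      push Not at this
      obtain ⟨x, hxX, hxu⟩ := this
      refine ⟨stabCoord U (z + x),
        Multiset.mem_map_of_mem _ (Finset.mem_image_of_mem _ hxX), ?_⟩
      rw [stabCoord_add]
      simpa [stabCoord] using hxu

theorem good_legal {d : ℕ} {U : Finset (Finset (Fin d → ℤ))} (hU : isUpdateFamily U)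
    {Λ : Set (Fin d → ℤ)} {r : ℕ → ℝ} {n : ℕ} {R : ℝ} (hR : 0 ≤ R)
    (hRU : ∀ X ∈ U, ∀ x ∈ X, ∀ u, |stabCoord U x u| ≤ R)
    (r0 : ∀ k, 0 ≤ r k) (r2 : ∀ k, 2 * r (k + 1) ≤ r k) (rn : ∀ k ≤ n, R + R ≤ r k)
    (η η' : (Fin d → ℤ) → Bool) (hm : legalMove U Λ η η')
    (F F' : Finset (Fin d → ℤ)) (hF : ∀ s, s ∈ F ↔ s ∈ Λ ∧ η s = false)
    (hF' : ∀ s, s ∈ F' ↔ s ∈ Λ ∧ η' s = false) (hc : F.card ≤ n) (hc' : F'.card ≤ n)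
    (hg : RGood (stabCoord U '' Λᶜ) r (F.val.map (stabCoord U))) :
    RGood (stabCoord U '' Λᶜ) r (F'.val.map (stabCoord U)) := by
  classical
  rcases hm with hm | ⟨z, hz, hzf, hs, X, hX, hx⟩
  · have : F' = F := by
      ext s
      rw [hF, hF']
      constructor
      · rintro ⟨a, b⟩; exact ⟨a, by rw [← hm s a]; exact b⟩
      · rintro ⟨a, b⟩; exact ⟨a, by rw [hm s a]; exact b⟩
    rwa [this]
  · have hxx : ∀ x ∈ X, z + x ∉ Λ ∨ (z + x ∈ Λ ∧ η (z + x) = false) := by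
      intro x hxX
      have := hx x hxX
      unfold extCfg at this
      by_cases hL : z + x ∈ Λ
      · rw [if_pos hL] at this; exact Or.inr ⟨hL, this⟩
      · exact Or.inl hL
    have hne : ∀ x ∈ X, z + x ≠ z := by
      intro x hxX h0
      have : x = 0 := by simpa using h0
      exact (hU X hX).2 (this ▸ hxX)
    cases hηz : η z with
    | true =>
      rw [hηz] at hzf
      have hzF : z ∉ F := by rw [hF, hηz]; simp
      have hins : F' = F.cons z hzF := by
        ext s
        rw [Finset.mem_cons, hF, hF']
        by_cases hsz : s = z
        · subst hsz; simp [hz, hzf]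
        · constructor
          · rintro ⟨a, b⟩; exact Or.inr ⟨a, by rw [← hs s a hsz]; exact b⟩
          · rintro (a | ⟨a, b⟩)
            · exact absurd a hsz
            · exact ⟨a, by rw [hs s a hsz]; exact b⟩
      rw [hins, Finset.cons_val, Multiset.map_cons]
      refine (good_move hU hR hRU r0 r2 rn F z ?_ X hX ?_).2 hg
      · rw [hins, Finset.card_cons] at hc'; exact hc'
      · intro x hxX
        rw [hF]; exact hxx x hxX
    | false =>
      rw [hηz] at hzf
      have hzF : z ∉ F' := by rw [hF', hzf]; simp
      have hins : F = F'.cons z hzF := by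
        ext s
        rw [Finset.mem_cons, hF, hF']
        by_cases hsz : s = z
        · subst hsz; simp [hz, hηz]
        · constructor
          · rintro ⟨a, b⟩; exact Or.inr ⟨a, by rw [hs s a hsz]; exact b⟩
          · rintro (a | ⟨a, b⟩)
            · exact absurd a hsz
            · exact ⟨a, by rw [← hs s a hsz]; exact b⟩
      rw [hins, Finset.cons_val, Multiset.map_cons] at hg
      refine (good_move hU hR hRU r0 r2 rn F' z ?_ X hX ?_).1 hg
      · rw [hins, Finset.card_cons] at hc; exact hc
      · intro x hxX
        rw [hF']
        rcases hxx x hxX with a | ⟨a, b⟩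
        · exact Or.inl a
        · exact Or.inr ⟨a, by rw [hs _ a (hne x hxX)]; exact b⟩

/-- Main theorem: if `U` is not supercritical unrooted, there is a constant `κ > 0` such
that for every `n`, every configuration reachable in the box
`{-⌊κ n 2^n⌋, ..., ⌊κ n 2^n⌋}^d` from all-ones using at most `n` simultaneous zeroes
has a one at the origin. -/
theorem stmt12 (d : ℕ) (hd : 1 ≤ d) (U : Finset (Finset (Fin d → ℤ)))
    (hU : isUpdateFamily U) (h : ¬ supUnrooted U) :
    ∃ κ : ℝ, 0 < κ ∧ ∀ n : ℕ,
      ∀ η ∈ V U n {s : Fin d → ℤ |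
          ∀ i, -⌊κ * n * 2 ^ n⌋ ≤ s i ∧ s i ≤ ⌊κ * n * 2 ^ n⌋},
        η 0 = true := by
  classical
  obtain ⟨C, hC, hcoer⟩ := coercive U h
  obtain ⟨R, hR, hRU⟩ := range_bound U
  refine ⟨4 * C * R, by positivity, ?_⟩
  intro n η hη
  set Λ : Set (Fin d → ℤ) := {s : Fin d → ℤ |
    ∀ i, -⌊4 * C * R * n * 2 ^ n⌋ ≤ s i ∧ s i ≤ ⌊4 * C * R * n * 2 ^ n⌋} with hΛ
  obtain ⟨m, p, hp0, hpm, hleg, hcard⟩ := hη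
  have h0Λ : (0 : Fin d → ℤ) ∈ Λ := by
    intro i
    have : 0 ≤ ⌊4 * C * R * n * 2 ^ n⌋ := Int.floor_nonneg.2 (by positivity)
    simp only [Pi.zero_apply]
    omega
  have hfin : ∀ j ≤ m, ∃ F : Finset (Fin d → ℤ), F.card ≤ n ∧
      ∀ s, s ∈ F ↔ s ∈ Λ ∧ p j s = false := by
    intro j hj
    have hf : {s ∈ Λ | p j s = false}.Finite :=
      Set.finite_of_encard_le_coe (hcard j hj)
    refine ⟨hf.toFinset, ?_, fun s => by simp⟩
    have := hcard j hj
    rw [hf.encard_eq_coe_toFinset_card] at this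
    exact_mod_cast this
  let r : ℕ → ℝ := fun k => 2 * R * 2 ^ n * (1 / 2) ^ k
  have r0 : ∀ k, 0 ≤ r k := fun k => by positivity
  have r2 : ∀ k, 2 * r (k + 1) ≤ r k := fun k => by
    simp only [r, pow_succ]; apply le_of_eq; ring
  have rn : ∀ k ≤ n, R + R ≤ r k := by
    intro k hk
    simp only [r]
    have h1 : (1 : ℝ) ≤ 2 ^ n * (1 / 2) ^ k := by
      rw [one_div, inv_pow, ← div_eq_mul_inv, one_le_div (by positivity)]
      exact pow_le_pow_right₀ (by norm_num) hk
    nlinarith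
  have hgood : ∀ j ≤ m, ∀ F : Finset (Fin d → ℤ), F.card ≤ n →
      (∀ s, s ∈ F ↔ s ∈ Λ ∧ p j s = false) →
      RGood (stabCoord U '' Λᶜ) r (F.val.map (stabCoord U)) := by
    intro j
    induction j with
    | zero =>
      intro _ F _ hF
      have : F = ∅ := by
        apply Finset.eq_empty_of_forall_notMem
        intro s hs
        obtain ⟨a, b⟩ := (hF s).1 hs
        rw [hp0 s a] at b
        simp at b
      subst this
      simpa using RGood.nil
    | succ j ih =>
      intro hj F' hc' hF'
      obtain ⟨F, hc, hF⟩ := hfin j (by omega)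
      exact good_legal hU hR.le hRU r0 r2 rn (p j) (p (j + 1)) (hleg j (by omega)) F F' hF hF' hc hc'
        (ih (by omega) F hc hF)
  rw [← hpm 0 h0Λ]
  by_contra hne
  have hfalse : p m 0 = false := by simpa using hne
  obtain ⟨F, hc, hF⟩ := hfin m le_rfl
  have h0F : (0 : Fin d → ℤ) ∈ F := (hF 0).2 ⟨h0Λ, hfalse⟩
  have hn : 1 ≤ n := (Finset.card_pos.2 ⟨0, h0F⟩).trans_le hc
  obtain ⟨b, ⟨s, hs, rfl⟩, hb⟩ := (hgood m le_rfl F hc hF).dist r0 r2 (stabCoord U 0)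
    (Multiset.mem_map_of_mem _ h0F)
  have hM : ∀ u, |stabCoord U s u| ≤ 2 * R * 2 ^ n := by
    intro u
    have h1 := hb u
    have h2 : stabCoord U (0 : Fin d → ℤ) u = 0 := by simp [stabCoord, dotp]
    rw [h2, zero_sub, abs_neg] at h1
    have h3 := r0 (Multiset.card (F.val.map (stabCoord U)))
    have h4 : r 0 = 2 * R * 2 ^ n := by simp [r]
    linarith
  have hbd := hcoer s _ (by positivity) hM
  apply hs
  intro i
  have h1 := hbd i
  have hn' : (1 : ℝ) ≤ n := by exact_mod_cast hn
  have h2 : C * (2 * R * 2 ^ n) ≤ 4 * C * R * n * 2 ^ n := by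
    have : 0 ≤ C * R * 2 ^ n := by positivity
    nlinarith
  obtain ⟨h3, h4⟩ := abs_le.1 (h1.trans h2)
  constructor
  · have : -(s i) ≤ ⌊4 * C * R * n * 2 ^ n⌋ := by
      rw [Int.le_floor]; push_cast; linarith
    omega
  · rw [Int.le_floor]; exact h4
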